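/- (Monotone convergence / Fatou property of the mixed-norm Herz norm.) Let n ∈ ℕ, p⃗, q⃗ ∈ (0,∞]^n and α⃗ ∈ ℝⁿ. If f and {f_m}_{m∈ℕ} are measurable functions on ℝⁿ with 0 ≤ f_m ↑ f almost everywhere as m → ∞, then ‖f_m‖_{Ė^{α⃗,p⃗}_{q⃗}(ℝⁿ)} ↑ ‖f‖_{Ė^{α⃗,p⃗}_{q⃗}(ℝⁿ)} as m → ∞. -/

import Mathlib

open MeasureTheory ENNReal Filter

noncomputable section

/-- The dyadic annulus `R_k = (-2^k, 2^k) \ (-2^(k-1), 2^(k-1))` in `ℝ`. -/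
def herzRing (k : ℤ) : Set ℝ :=
  Set.Ioo (-(2 : ℝ) ^ k) ((2 : ℝ) ^ k) \ Set.Ioo (-(2 : ℝ) ^ (k - 1)) ((2 : ℝ) ^ (k - 1))

/-- The `L^q` "norm" (valued in `ℝ≥0∞`) of an `ℝ≥0∞`-valued function on a set `s ⊆ ℝ`,
with the usual modification when `q = ∞`. -/
def lqNormOn (q : ℝ≥0∞) (s : Set ℝ) (g : ℝ → ℝ≥0∞) : ℝ≥0∞ :=
  if q = ∞ then essSup (s.indicator g) volume
  else (∫⁻ x in s, g x ^ q.toReal) ^ (1 / q.toReal)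

/-- The `l^p` norm over `ℤ` of an `ℝ≥0∞`-valued sequence, with the usual modification
when `p = ∞`. -/
def lpZNorm (p : ℝ≥0∞) (a : ℤ → ℝ≥0∞) : ℝ≥0∞ :=
  if p = ∞ then ⨆ k, a k
  else (∑' k : ℤ, a k ^ p.toReal) ^ (1 / p.toReal)

/-- The one-dimensional Herz norm `K^{α,p}_q` of an `ℝ≥0∞`-valued function on `ℝ`. -/
def herzNorm1 (α : ℝ) (p q : ℝ≥0∞) (g : ℝ → ℝ≥0∞) : ℝ≥0∞ :=
  lpZNorm p fun k => ENNReal.ofReal ((2 : ℝ) ^ ((k : ℝ) * α)) * lqNormOn q (herzRing k) g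

/-- The mixed-norm Herz norm on `ℝⁿ` of an `ℝ≥0∞`-valued function: the Herz norm
`K^{α_1,p_1}_{q_1}` is applied in the first variable, then `K^{α_2,p_2}_{q_2}` in the
second variable, …, and finally `K^{α_n,p_n}_{q_n}` in the last variable. -/
def mixedHerzNormE : (n : ℕ) → (Fin n → ℝ) → (Fin n → ℝ≥0∞) → (Fin n → ℝ≥0∞) →
    ((Fin n → ℝ) → ℝ≥0∞) → ℝ≥0∞
  | 0, _, _, _, f => f fun i => i.elim0
  | n + 1, α, p, q, f =>
    herzNorm1 (α (Fin.last n)) (p (Fin.last n)) (q (Fin.last n)) fun xlast =>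
      mixedHerzNormE n (Fin.init α) (Fin.init p) (Fin.init q) fun y => f (Fin.snoc y xlast)

/-- The mixed-norm Herz norm `‖f‖_{Ė^{α,p}_q(ℝⁿ)}` of a complex-valued function on `ℝⁿ`. -/
def herzNormC (n : ℕ) (α : Fin n → ℝ) (p q : Fin n → ℝ≥0∞) (f : (Fin n → ℝ) → ℂ) : ℝ≥0∞ :=
  mixedHerzNormE n α p q fun x => (‖f x‖₊ : ℝ≥0∞)

/-- `I_m = (-2^m, -2^{-m}] ∪ [2^{-m}, 2^m)`. -/
def herzI (m : ℕ) : Set ℝ :=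
  Set.Ioc (-(2 : ℝ) ^ (m : ℤ)) (-(2 : ℝ) ^ (-(m : ℤ))) ∪
    Set.Ico ((2 : ℝ) ^ (-(m : ℤ))) ((2 : ℝ) ^ (m : ℤ))

/-- `A_m = I_m^n ⊆ ℝⁿ`. -/
def herzA (n m : ℕ) : Set (Fin n → ℝ) := Set.univ.pi fun _ => herzI m

/-- The class `H(ℝⁿ)` of simple functions built from finitely many pairwise disjoint
parallelepipeds contained in some `A_m`. -/
def IsHSimple (n : ℕ) (f : (Fin n → ℝ) → ℂ) : Prop :=
  ∃ (m N : ℕ) (a : Fin N → ℂ) (E : Fin N → Fin n → Set ℝ),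
    (∀ k i, MeasurableSet (E k i)) ∧
    (∀ k, Set.univ.pi (E k) ⊆ herzA n m) ∧
    (Pairwise fun k l => Disjoint (Set.univ.pi (E k)) (Set.univ.pi (E l))) ∧
    f = fun x => ∑ k, (Set.univ.pi (E k)).indicator (fun _ => a k) x

/-- The Euclidean ball `B(x,r)` in `ℝⁿ`. -/
def eucBall (n : ℕ) (x : Fin n → ℝ) (r : ℝ) : Set (Fin n → ℝ) :=
  {y | ∑ i, (y i - x i) ^ 2 < r ^ 2}

/-- The (uncentered) maximal operator in the `k`-th variable. -/
def maxVar (n : ℕ) (k : Fin n) (g : (Fin n → ℝ) → ℝ≥0∞) : (Fin n → ℝ) → ℝ≥0∞ :=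
  fun x => ⨆ (a : ℝ) (b : ℝ) (_ : x k ∈ Set.Ioo a b),
    (volume (Set.Ioo a b))⁻¹ * ∫⁻ y in Set.Ioo a b, g (Function.update x k y)

/-- The centered Hardy–Littlewood maximal operator on `ℝⁿ`. -/
def centeredMax (n : ℕ) (g : (Fin n → ℝ) → ℝ≥0∞) : (Fin n → ℝ) → ℝ≥0∞ :=
  fun x => ⨆ (r : ℝ) (_ : 0 < r),
    (volume (eucBall n x r))⁻¹ * ∫⁻ y in eucBall n x r, g y

/-- The composition `M_n ∘ ⋯ ∘ M_1` of the maximal operators in each variable. -/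
def iteratedMax (n : ℕ) (g : (Fin n → ℝ) → ℝ≥0∞) : (Fin n → ℝ) → ℝ≥0∞ :=
  (List.ofFn fun k : Fin n => maxVar n k).foldl (fun h F => F h) g

/-- The iterated maximal operator `ℳ_t(f) = [M_n ⋯ M_1(|f|^t)]^{1/t}`. -/
def iterMaxPow (n : ℕ) (t : ℝ) (f : (Fin n → ℝ) → ℂ) : (Fin n → ℝ) → ℝ≥0∞ :=
  fun x => iteratedMax n (fun y => (‖f y‖₊ : ℝ≥0∞) ^ t) x ^ (1 / t)

/-- The `l^r`-Herz type mixed norm of a sequence of functions on `ℝⁿ`. -/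
def herzSeqNorm (n : ℕ) (r : ℝ≥0∞) (α : Fin n → ℝ) (p q : Fin n → ℝ≥0∞)
    (F : ℤ → (Fin n → ℝ) → ℂ) : ℝ≥0∞ :=
  mixedHerzNormE n α p q fun x => lpZNorm r fun j => (‖F j x‖₊ : ℝ≥0∞)

/-- `N` is a ball quasi-Banach function norm on (nonnegative extended-real-valued)
measurable functions on `ℝⁿ`. -/
def IsBQBFNorm (n : ℕ) (N : ((Fin n → ℝ) → ℝ≥0∞) → ℝ≥0∞) : Prop :=
  (∀ f : (Fin n → ℝ) → ℝ≥0∞, Measurable f → N f = 0 → f =ᵐ[volume] 0) ∧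
  (∀ f g : (Fin n → ℝ) → ℝ≥0∞, Measurable f → Measurable g →
    (∀ᵐ x ∂volume, g x ≤ f x) → N g ≤ N f) ∧
  (∀ (fm : ℕ → (Fin n → ℝ) → ℝ≥0∞) (f : (Fin n → ℝ) → ℝ≥0∞),
    (∀ m, Measurable (fm m)) → Measurable f →
    (∀ᵐ x ∂volume, Monotone (fun m => fm m x) ∧
      Tendsto (fun m => fm m x) atTop (nhds (f x))) →
    Monotone (fun m => N (fm m)) ∧ Tendsto (fun m => N (fm m)) atTop (nhds (N f))) ∧
  (∀ (x : Fin n → ℝ) (r : ℝ), 0 < r →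
    N ((eucBall n x r).indicator fun _ => (1 : ℝ≥0∞)) ≠ ∞)

/-- `N` is a ball Banach function norm: a ball quasi-Banach function norm that moreover
satisfies the triangle inequality and locally dominates the `L¹` norm. -/
def IsBallBanachNorm (n : ℕ) (N : ((Fin n → ℝ) → ℝ≥0∞) → ℝ≥0∞) : Prop :=
  IsBQBFNorm n N ∧
  (∀ f g : (Fin n → ℝ) → ℝ≥0∞, Measurable f → Measurable g → N (f + g) ≤ N f + N g) ∧
  (∀ (x : Fin n → ℝ) (r : ℝ), 0 < r → ∃ C : ℝ≥0∞, 0 < C ∧ C ≠ ∞ ∧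
    ∀ f : (Fin n → ℝ) → ℝ≥0∞, Measurable f → (∫⁻ y in eucBall n x r, f y) ≤ C * N f)

/-- The associate (Köthe dual) norm of a function norm `N`. -/
def assocNormOf (n : ℕ) (N : ((Fin n → ℝ) → ℝ≥0∞) → ℝ≥0∞)
    (f : (Fin n → ℝ) → ℝ≥0∞) : ℝ≥0∞ :=
  ⨆ (g : (Fin n → ℝ) → ℝ≥0∞) (_ : Measurable g) (_ : N g = 1), ∫⁻ x, f x * g x

/-- The `θ`-convexification of a function norm: `‖f‖_{X^θ} = ‖|f|^θ‖_X^{1/θ}`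
(here stated with `θ` in place of `1/p`, so `X^{1/p}` is `convexPow n (1/p) N`). -/
def convexPow (n : ℕ) (θ : ℝ) (N : ((Fin n → ℝ) → ℝ≥0∞) → ℝ≥0∞)
    (f : (Fin n → ℝ) → ℝ≥0∞) : ℝ≥0∞ :=
  N (fun x => f x ^ θ) ^ (1 / θ)

/-- The associate space norm of the mixed-norm Herz space, for complex-valued functions. -/
def herzAssocNormC (n : ℕ) (α : Fin n → ℝ) (p q : Fin n → ℝ≥0∞)
    (f : (Fin n → ℝ) → ℂ) : ℝ≥0∞ :=
  ⨆ (g : (Fin n → ℝ) → ℂ) (_ : Measurable g) (_ : herzNormC n α p q g = 1),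
    ∫⁻ x, (‖f x * g x‖₊ : ℝ≥0∞)

def MC (u : ℕ → ℝ≥0∞) (l : ℝ≥0∞) : Prop := Monotone u ∧ Tendsto u atTop (nhds l)

theorem MC.rpow {u : ℕ → ℝ≥0∞} {l : ℝ≥0∞} (h : MC u l) {r : ℝ} (hr : 0 ≤ r) :
    MC (fun m => u m ^ r) (l ^ r) :=
  ⟨fun _ _ hab => ENNReal.rpow_le_rpow (h.1 hab) hr,
    (ENNReal.continuous_rpow_const.tendsto _).comp h.2⟩

theorem MC.const_mul {u : ℕ → ℝ≥0∞} {l : ℝ≥0∞} (h : MC u l) {c : ℝ≥0∞} (hc : c ≠ ∞) :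
    MC (fun m => c * u m) (c * l) :=
  ⟨fun _ _ hab => mul_le_mul_right (h.1 hab) c,
    ENNReal.Tendsto.const_mul h.2 (Or.inr hc)⟩

theorem MC.le {u : ℕ → ℝ≥0∞} {l : ℝ≥0∞} (h : MC u l) (m : ℕ) : u m ≤ l :=
  h.1.ge_of_tendsto h.2 m

theorem MC.of_le {u : ℕ → ℝ≥0∞} {l : ℝ≥0∞} (h : Monotone u) (h1 : ∀ m, u m ≤ l)
    (h2 : l ≤ ⨆ m, u m) : MC u l := by
  refine ⟨h, ?_⟩
  have := tendsto_atTop_iSup h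
  rwa [le_antisymm (iSup_le h1) h2] at this

theorem MC.le_iSup {u : ℕ → ℝ≥0∞} {l : ℝ≥0∞} (h : MC u l) : l ≤ ⨆ m, u m :=
  (tendsto_nhds_unique h.2 (tendsto_atTop_iSup h.1)).le

theorem MC.lint {X : Type*} [MeasurableSpace X] {μ : Measure X} {g : ℕ → X → ℝ≥0∞}
    {g0 : X → ℝ≥0∞} (hg : ∀ m, Measurable (g m)) (h : ∀ᵐ x ∂μ, MC (fun m => g m x) (g0 x)) :
    MC (fun m => ∫⁻ x, g m x ∂μ) (∫⁻ x, g0 x ∂μ) := by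
  refine ⟨fun a b hab => lintegral_mono_ae ?_, ?_⟩
  · filter_upwards [h] with x hx using hx.1 hab
  · exact lintegral_tendsto_of_tendsto_of_monotone (fun m => (hg m).aemeasurable)
      (h.mono fun x hx => hx.1) (h.mono fun x hx => hx.2)

theorem MC.ess {X : Type*} [MeasurableSpace X] {μ : Measure X} {g : ℕ → X → ℝ≥0∞}
    {g0 : X → ℝ≥0∞} (h : ∀ᵐ x ∂μ, MC (fun m => g m x) (g0 x)) :
    MC (fun m => essSup (g m) μ) (essSup g0 μ) := by
  refine MC.of_le (fun a b hab => essSup_mono_ae ?_) (fun m => essSup_mono_ae ?_) ?_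
  · filter_upwards [h] with x hx using hx.1 hab
  · filter_upwards [h] with x hx using hx.le m
  · refine essSup_le_of_ae_le _ ?_
    have h2 : ∀ᵐ x ∂μ, ∀ m, g m x ≤ essSup (g m) μ :=
      ae_all_iff.2 fun m => ENNReal.ae_le_essSup _
    filter_upwards [h, h2] with x hx h2x
    exact hx.le_iSup.trans (iSup_mono h2x)

theorem MC.lq (q : ℝ≥0∞) (s : Set ℝ) {g : ℕ → ℝ → ℝ≥0∞} {g0 : ℝ → ℝ≥0∞}
    (hg : ∀ m, Measurable (g m)) (h : ∀ᵐ x, MC (fun m => g m x) (g0 x)) :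
    MC (fun m => lqNormOn q s (g m)) (lqNormOn q s g0) := by
  unfold lqNormOn
  split_ifs
  · apply MC.ess
    filter_upwards [h] with x hx
    by_cases hs : x ∈ s
    · simpa [hs] using hx
    · simp only [hs, not_false_eq_true, Set.indicator_of_notMem]
      exact ⟨monotone_const, tendsto_const_nhds⟩
  · refine MC.rpow (MC.lint (fun m => (hg m).pow_const _) ?_) (by positivity)
    filter_upwards [ae_restrict_of_ae h] with x hx
    exact hx.rpow toReal_nonneg

theorem MC.lp (p : ℝ≥0∞) {a : ℕ → ℤ → ℝ≥0∞} {a0 : ℤ → ℝ≥0∞}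
    (h : ∀ k, MC (fun m => a m k) (a0 k)) :
    MC (fun m => lpZNorm p (a m)) (lpZNorm p a0) := by
  unfold lpZNorm
  split_ifs
  · refine MC.of_le (fun i j hij => iSup_mono fun k => (h k).1 hij)
      (fun m => iSup_mono fun k => (h k).le m) ?_
    rw [iSup_comm]
    exact iSup_mono fun k => (h k).le_iSup
  · refine MC.rpow ?_ (by positivity)
    simp_rw [← lintegral_count]
    exact MC.lint (fun m => measurable_of_countable _)
      (Eventually.of_forall fun k => (h k).rpow toReal_nonneg)

theorem MC.herz (α : ℝ) (p q : ℝ≥0∞) {g : ℕ → ℝ → ℝ≥0∞} {g0 : ℝ → ℝ≥0∞}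
    (hg : ∀ m, Measurable (g m)) (h : ∀ᵐ x, MC (fun m => g m x) (g0 x)) :
    MC (fun m => herzNorm1 α p q (g m)) (herzNorm1 α p q g0) :=
  MC.lp p fun k => (MC.lq q (herzRing k) hg h).const_mul ofReal_ne_top

theorem measurableSet_herzRing (k : ℤ) : MeasurableSet (herzRing k) :=
  measurableSet_Ioo.diff measurableSet_Ioo

theorem measurable_essSup_right {X : Type*} [MeasurableSpace X] {F : X → ℝ → ℝ≥0∞}
    (hF : Measurable (Function.uncurry F)) :
    Measurable fun x => essSup (F x) (volume : Measure ℝ) := by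
  refine measurable_of_Iic fun c => ?_
  have : (fun x => essSup (F x) (volume : Measure ℝ)) ⁻¹' Set.Iic c
      = (fun x => volume (Prod.mk x ⁻¹' (Function.uncurry F ⁻¹' Set.Ioi c))) ⁻¹' {0} := by
    ext x
    simp only [Set.mem_preimage, Set.mem_Iic, Set.mem_singleton_iff]
    constructor
    · intro hx
      have h1 : ∀ᵐ y, F x y ≤ c := by
        filter_upwards [ENNReal.ae_le_essSup (μ := volume) (F x)] with y hy using hy.trans hx
      rw [ae_iff] at h1
      convert h1 using 2
      ext y; simp [Function.uncurry]
    · intro hx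
      refine essSup_le_of_ae_le _ ?_
      change ∀ᵐ y, F x y ≤ c
      rw [ae_iff]
      convert hx using 2
      ext y; simp [Function.uncurry]
  rw [this]
  exact measurable_measure_prodMk_left (hF measurableSet_Ioi) (measurableSet_singleton 0)

theorem measurable_lq (q : ℝ≥0∞) {s : Set ℝ} (hs : MeasurableSet s) {X : Type*}
    [MeasurableSpace X] {F : X → ℝ → ℝ≥0∞} (hF : Measurable (Function.uncurry F)) :
    Measurable fun x => lqNormOn q s (F x) := by
  unfold lqNormOn
  split_ifs
  · apply measurable_essSup_right
    have : (Function.uncurry fun x => s.indicator (F x))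
        = (Prod.snd ⁻¹' s).indicator (Function.uncurry F) := by
      ext ⟨x, y⟩
      simp only [Set.indicator, Function.uncurry]
      rfl
    rw [this]
    exact hF.indicator (measurable_snd hs)
  · refine Measurable.pow_const ?_ _
    exact Measurable.lintegral_prod_right' (f := fun z : X × ℝ => F z.1 z.2 ^ q.toReal)
      (hF.pow_const _)

theorem measurable_herz (α : ℝ) (p q : ℝ≥0∞) {X : Type*}
    [MeasurableSpace X] {F : X → ℝ → ℝ≥0∞} (hF : Measurable (Function.uncurry F)) :
    Measurable fun x => herzNorm1 α p q (F x) := by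
  have h1 : ∀ k : ℤ, Measurable fun x =>
      ENNReal.ofReal ((2 : ℝ) ^ ((k : ℝ) * α)) * lqNormOn q (herzRing k) (F x) :=
    fun k => (measurable_lq q (measurableSet_herzRing k) hF).const_mul _
  unfold herzNorm1 lpZNorm
  split_ifs
  · exact Measurable.iSup h1
  · exact (Measurable.ennreal_tsum fun k => (h1 k).pow_const _).pow_const _

theorem measurable_snoc_herz (n : ℕ) :
    Measurable fun z : (Fin n → ℝ) × ℝ => (Fin.snoc z.1 z.2 : Fin (n + 1) → ℝ) := by
  refine measurable_pi_lambda _ fun i => ?_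
  refine Fin.lastCases ?_ (fun j => ?_) i
  · simpa using measurable_snd
  · simp only [Fin.snoc_castSucc]
    exact (measurable_pi_apply j).comp measurable_fst

theorem measurable_mixed (n : ℕ) : ∀ (α : Fin n → ℝ) (p q : Fin n → ℝ≥0∞) {X : Type}
    [MeasurableSpace X] {F : X → (Fin n → ℝ) → ℝ≥0∞}, Measurable (Function.uncurry F) →
    Measurable fun x => mixedHerzNormE n α p q (F x) := by
  induction n with
  | zero =>
    intro α p q X _ F hF
    exact hF.comp (measurable_id.prodMk measurable_const)
  | succ n ih =>
    intro α p q X _ F hF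
    simp only [mixedHerzNormE]
    apply measurable_herz
    refine ih (Fin.init α) (Fin.init p) (Fin.init q) (X := X × ℝ)
      (F := fun z y => F z.1 (Fin.snoc y z.2)) ?_
    exact hF.comp ((measurable_fst.comp measurable_fst).prodMk
      ((measurable_snoc_herz n).comp
        (measurable_snd.prodMk (measurable_snd.comp measurable_fst))))

theorem ae_snoc_herz (n : ℕ) {P : (Fin (n + 1) → ℝ) → Prop} (h : ∀ᵐ x, P x) :
    ∀ᵐ t : ℝ, ∀ᵐ y : Fin n → ℝ, P (Fin.snoc y t) := by
  have h1 := (volume_preserving_piFinSuccAbove (fun _ : Fin (n + 1) => ℝ) (Fin.last n)).symm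
  have h2 := h1.quasiMeasurePreserving.ae h
  have h3 := Measure.ae_ae_of_ae_prod h2
  filter_upwards [h3] with t ht
  filter_upwards [ht] with y hy
  simpa [MeasurableEquiv.piFinSuccAbove, Fin.insertNth_last', Fin.snocEquiv] using hy

theorem MC.mixed (n : ℕ) : ∀ (α : Fin n → ℝ) (p q : Fin n → ℝ≥0∞)
    (f : (Fin n → ℝ) → ℝ≥0∞) (fm : ℕ → (Fin n → ℝ) → ℝ≥0∞), (∀ m, Measurable (fm m)) →
    (∀ᵐ x, MC (fun m => fm m x) (f x)) →
    MC (fun m => mixedHerzNormE n α p q (fm m)) (mixedHerzNormE n α p q f) := by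
  induction n with
  | zero =>
    intro α p q f fm _ h
    simp only [mixedHerzNormE]
    obtain ⟨x, hx⟩ := h.exists
    rwa [Subsingleton.elim x (fun i => i.elim0)] at hx
  | succ n ih =>
    intro α p q f fm hfm h
    simp only [mixedHerzNormE]
    apply MC.herz
    · intro m
      refine measurable_mixed n _ _ _ (F := fun t y => fm m (Fin.snoc y t)) ?_
      exact (hfm m).comp ((measurable_snoc_herz n).comp measurable_swap)
    · filter_upwards [ae_snoc_herz n h] with t ht
      refine ih _ _ _ _ _ (fun m => ?_) ht
      exact (hfm m).comp ((measurable_snoc_herz n).comp (measurable_id.prodMk measurable_const))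

/-- the Fatou (monotone convergence) property of the mixed-norm
Herz norm. -/
theorem mixedHerz_monotone_convergence (n : ℕ) (p q : Fin n → ℝ≥0∞) (α : Fin n → ℝ)
    (hp : ∀ i, 0 < p i) (hq : ∀ i, 0 < q i)
    (f : (Fin n → ℝ) → ℝ≥0∞) (fm : ℕ → (Fin n → ℝ) → ℝ≥0∞)
    (hf : Measurable f) (hfm : ∀ m, Measurable (fm m))
    (h : ∀ᵐ x ∂(volume : Measure (Fin n → ℝ)), Monotone (fun m => fm m x) ∧
      Tendsto (fun m => fm m x) atTop (nhds (f x))) :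
    Monotone (fun m => mixedHerzNormE n α p q (fm m)) ∧
    Tendsto (fun m => mixedHerzNormE n α p q (fm m)) atTop
      (nhds (mixedHerzNormE n α p q f)) := by
  exact MC.mixed n α p q f fm hfm h
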